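/- Completeness of H_K with respect to the RNmatrix RM_K: for every set of formulas Γ and every formula A, if every valuation v ∈ F_K that designates all formulas of Γ also designates A, then Γ ⊢_{H_K} A. -/

import Mathlib

/-- Formulas of the modal language: propositional variables, negation,
the modality ⊖ (here `box`), and implication. -/
inductive Form : Type
  | var : ℕ → Form
  | neg : Form → Form
  | box : Form → Form
  | imp : Form → Form → Form

/-- A valuation `v = (v1, v2)` over the 4-valued Nmatrix for the minimal modal
logic M: `v1` behaves classically on ¬ and →, and `v1(⊖A) = v2(A)`;
`v2` is otherwise unconstrained. -/
structure Val where
  v1 : Form → Fin 2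
  v2 : Form → Fin 2
  neg_eq : ∀ A, v1 (Form.neg A) = 1 - v1 A
  imp_eq : ∀ A B, v1 (Form.imp A B) = max (1 - v1 A) (v1 B)
  box_eq : ∀ A, v1 (Form.box A) = v2 A

/-- The Hilbert calculus H_K: H plus axiom schema (K). -/
inductive HK : Set Form → Form → Prop
  | hyp {Γ A} : A ∈ Γ → HK Γ A
  | ax1 {Γ} (A B : Form) : HK Γ (A.imp (B.imp A))
  | ax2 {Γ} (A B C : Form) :
      HK Γ ((A.imp (B.imp C)).imp ((A.imp B).imp (A.imp C)))
  | ax3 {Γ} (A B : Form) : HK Γ ((B.neg.imp A.neg).imp (A.imp B))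
  | axK {Γ} (A B : Form) :
      HK Γ ((Form.box (A.imp B)).imp ((Form.box A).imp (Form.box B)))
  | mp {Γ A B} : HK Γ (A.imp B) → HK Γ A → HK Γ B

/-- The restriction defining F_K: valuations satisfying the (K) condition. -/
def FK (v : Val) : Prop :=
  ∀ A B : Form, v.v2 (A.imp B) ≤ max (1 - v.v2 A) (v.v2 B)

/-!
Lindenbaum's lemma extends a set `Γ` with `Γ ⊬ A` to a set `Δ` maximal with `Δ ⊬ A`. Such a `Δ`
is deductively closed and commutes with `¬` and `→`, so its indicator function is a legal first
component `v1`. The second component is forced by `v2 B = v1 (⊖B)`, and the condition defining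
`F_K` then says exactly that `Δ` contains every instance of (K). This valuation designates `Γ` but
not `A`. No Kripke model is needed because `v2` is not required to be compositional.
-/

namespace HK

variable {Γ Δ : Set Form} {A B : Form}

theorem mono (h : HK Γ A) (hΓΔ : Γ ⊆ Δ) : HK Δ A := by
  induction h with
  | hyp hmem => exact hyp (hΓΔ hmem)
  | ax1 => exact ax1 _ _
  | ax2 => exact ax2 _ _ _
  | ax3 => exact ax3 _ _
  | axK => exact axK _ _
  | mp _ _ ihImp ihAnt => exact mp ihImp ihAnt

theorem weaken (B : Form) (h : HK Γ A) : HK (insert B Γ) A :=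
  h.mono (Set.subset_insert B Γ)

theorem insert_self (A : Form) (Γ : Set Form) : HK (insert A Γ) A :=
  hyp (Set.mem_insert A Γ)

theorem imp_self (A : Form) : HK Γ (A.imp A) :=
  mp (mp (ax2 A (A.imp A) A) (ax1 A (A.imp A))) (ax1 A A)

theorem imp_of_right (A : Form) (h : HK Γ B) : HK Γ (A.imp B) :=
  mp (ax1 B A) h

theorem deduction (h : HK (insert A Γ) B) : HK Γ (A.imp B) := by
  induction h with
  | hyp hmem =>
    rcases hmem with rfl | hmem
    · exact imp_self _
    · exact imp_of_right A (hyp hmem)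
  | ax1 => exact imp_of_right A (ax1 _ _)
  | ax2 => exact imp_of_right A (ax2 _ _ _)
  | ax3 => exact imp_of_right A (ax3 _ _)
  | axK => exact imp_of_right A (axK _ _)
  | mp _ _ ihImp ihAnt => exact mp (mp (ax2 _ _ _) ihImp) ihAnt

theorem cut (h : HK (insert A Γ) B) (hA : HK Γ A) : HK Γ B :=
  mp h.deduction hA

theorem explosion (B : Form) (hA : HK Γ A) (hnegA : HK Γ A.neg) : HK Γ B :=
  mp (mp (ax3 A B) (imp_of_right B.neg hnegA)) hA

theorem of_insert_neg_self (h : HK (insert A.neg Γ) A) : HK Γ A :=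
  have hneg : HK Γ (A.neg.imp (A.imp A).neg) :=
    (explosion (A.imp A).neg h (insert_self A.neg Γ)).deduction
  mp (mp (ax3 (A.imp A) A) hneg) (imp_self A)

theorem of_insert_of_insert_neg (h : HK (insert B Γ) A) (hneg : HK (insert B.neg Γ) A) :
    HK Γ A := by
  have hB : HK (insert A.neg Γ) B := by
    apply of_insert_neg_self
    have hA : HK (insert B.neg (insert A.neg Γ)) A :=
      hneg.mono (Set.insert_subset_insert (Set.subset_insert A.neg Γ))
    exact explosion B hA ((insert_self A.neg Γ).weaken B.neg)
  exact of_insert_neg_self (mp (h.deduction.weaken A.neg) hB)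

theorem exists_finite_subset (h : HK Γ A) : ∃ Γ₀ ⊆ Γ, Γ₀.Finite ∧ HK Γ₀ A := by
  induction h with
  | @hyp C hmem =>
    exact ⟨{C}, Set.singleton_subset_iff.2 hmem, Set.finite_singleton C, hyp rfl⟩
  | ax1 => exact ⟨∅, Set.empty_subset _, Set.finite_empty, ax1 _ _⟩
  | ax2 => exact ⟨∅, Set.empty_subset _, Set.finite_empty, ax2 _ _ _⟩
  | ax3 => exact ⟨∅, Set.empty_subset _, Set.finite_empty, ax3 _ _⟩
  | axK => exact ⟨∅, Set.empty_subset _, Set.finite_empty, axK _ _⟩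
  | mp _ _ ihImp ihAnt =>
    obtain ⟨Γ₁, hsub₁, hfin₁, himp⟩ := ihImp
    obtain ⟨Γ₂, hsub₂, hfin₂, hant⟩ := ihAnt
    exact ⟨Γ₁ ∪ Γ₂, Set.union_subset hsub₁ hsub₂, hfin₁.union hfin₂,
      mp (himp.mono Set.subset_union_left) (hant.mono Set.subset_union_right)⟩

theorem exists_mem_of_sUnion {c : Set (Set Form)} (hdir : DirectedOn (· ⊆ ·) c)
    (hne : c.Nonempty) (h : HK (⋃₀ c) A) : ∃ S ∈ c, HK S A := by
  obtain ⟨Γ₀, hsub, hfin, hΓ₀⟩ := h.exists_finite_subset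
  obtain ⟨S, hS, hΓ₀S⟩ := hdir.exists_mem_subset_of_finite_of_subset_sUnion hne hfin hsub
  exact ⟨S, hS, hΓ₀.mono hΓ₀S⟩

end HK

/-- A set of formulas commuting with the classical connectives, as the set of formulas true
under a valuation does. -/
structure IsTruthSet (Δ : Set Form) : Prop where
  neg_mem_iff (A : Form) : A.neg ∈ Δ ↔ A ∉ Δ
  imp_mem_iff (A B : Form) : A.imp B ∈ Δ ↔ (A ∈ Δ → B ∈ Δ)

namespace IsTruthSet

variable {Δ : Set Form}

/-- The canonical valuation of a truth set: `v1` is the indicator function of `Δ`, and `v2` is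
read off from `v1` on boxed formulas. -/
noncomputable def toVal (hΔ : IsTruthSet Δ) : Val where
  v1 := Δ.indicator 1
  v2 A := Δ.indicator 1 A.box
  neg_eq A := by
    by_cases hA : A ∈ Δ <;> simp [hΔ.neg_mem_iff, hA]
  imp_eq A B := by
    by_cases hA : A ∈ Δ <;> by_cases hB : B ∈ Δ <;> simp [hΔ.imp_mem_iff, hA, hB]
  box_eq _ := rfl

theorem toVal_v1_eq_one_iff (hΔ : IsTruthSet Δ) (A : Form) : hΔ.toVal.v1 A = 1 ↔ A ∈ Δ := by
  by_cases hA : A ∈ Δ <;> simp [toVal, hA]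

theorem fK_toVal_iff (hΔ : IsTruthSet Δ) :
    FK hΔ.toVal ↔ ∀ A B : Form, (A.imp B).box.imp (A.box.imp B.box) ∈ Δ := by
  refine forall₂_congr fun A B => ?_
  rw [hΔ.imp_mem_iff, hΔ.imp_mem_iff]
  by_cases hAB : (A.imp B).box ∈ Δ <;> by_cases hA : A.box ∈ Δ <;>
    by_cases hB : B.box ∈ Δ <;> simp [toVal, hAB, hA, hB]

end IsTruthSet

/-- `A`-saturated sets: those maximal among the sets of formulas that do not derive `A` in `H_K`. -/
def IsSaturated (A : Form) (Δ : Set Form) : Prop :=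
  Maximal (fun S => ¬ HK S A) Δ

theorem exists_isSaturated_superset {Γ : Set Form} {A : Form} (h : ¬ HK Γ A) :
    ∃ Δ, Γ ⊆ Δ ∧ IsSaturated A Δ := by
  refine zorn_subset_nonempty {S | ¬ HK S A} (fun c hc hchain hne => ?_) Γ h
  refine ⟨⋃₀ c, fun hunion => ?_, fun _ => Set.subset_sUnion_of_mem⟩
  obtain ⟨S, hS, hSA⟩ := HK.exists_mem_of_sUnion hchain.directedOn hne hunion
  exact hc hS hSA

namespace IsSaturated

variable {A B : Form} {Δ : Set Form}

theorem not_derives (hΔ : IsSaturated A Δ) : ¬ HK Δ A :=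
  hΔ.prop

theorem insert_derives (hΔ : IsSaturated A Δ) (hB : B ∉ Δ) : HK (insert B Δ) A :=
  not_not.1 fun h => hB (hΔ.mem_of_prop_insert h)

theorem mem_iff_derives (hΔ : IsSaturated A Δ) : B ∈ Δ ↔ HK Δ B := by
  refine ⟨HK.hyp, fun h => ?_⟩
  by_contra hB
  exact hΔ.not_derives ((hΔ.insert_derives hB).cut h)

theorem neg_mem_iff (hΔ : IsSaturated A Δ) (B : Form) : B.neg ∈ Δ ↔ B ∉ Δ := by
  constructor
  · intro hneg hB
    exact hΔ.not_derives (HK.explosion A (HK.hyp hB) (HK.hyp hneg))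
  · intro hB
    by_contra hneg
    exact hΔ.not_derives
      (HK.of_insert_of_insert_neg (hΔ.insert_derives hB) (hΔ.insert_derives hneg))

theorem imp_mem_iff (hΔ : IsSaturated A Δ) (B C : Form) :
    B.imp C ∈ Δ ↔ (B ∈ Δ → C ∈ Δ) := by
  constructor
  · intro himp hB
    exact hΔ.mem_iff_derives.2 (HK.mp (HK.hyp himp) (HK.hyp hB))
  · intro h
    rw [hΔ.mem_iff_derives]
    by_cases hB : B ∈ Δ
    · exact HK.imp_of_right B (HK.hyp (h hB))
    · have hneg : HK Δ B.neg := HK.hyp ((hΔ.neg_mem_iff B).2 hB)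
      exact (HK.explosion C (HK.insert_self B Δ) (hneg.weaken B)).deduction

theorem isTruthSet (hΔ : IsSaturated A Δ) : IsTruthSet Δ :=
  ⟨hΔ.neg_mem_iff, hΔ.imp_mem_iff⟩

end IsSaturated

/-- Completeness of H_K w.r.t. the RNmatrix RM_K. -/
theorem completeness_HK (Γ : Set Form) (A : Form)
    (h : ∀ v : Val, FK v → (∀ B ∈ Γ, v.v1 B = 1) → v.v1 A = 1) :
    HK Γ A := by
  by_contra hA
  obtain ⟨Δ, hΓΔ, hΔ⟩ := exists_isSaturated_superset hA
  have hTruth : IsTruthSet Δ := hΔ.isTruthSet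
  have hFK : FK hTruth.toVal :=
    hTruth.fK_toVal_iff.2 fun B C => hΔ.mem_iff_derives.2 (HK.axK B C)
  have hdesignated : hTruth.toVal.v1 A = 1 :=
    h hTruth.toVal hFK fun B hB => (hTruth.toVal_v1_eq_one_iff B).2 (hΓΔ hB)
  exact hΔ.not_derives (HK.hyp ((hTruth.toVal_v1_eq_one_iff A).1 hdesignated))
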